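/- (Corollary 1.BB) Let ψ ∈ Ψ(a,b) and ζ, ν ∈ EΨ(a,b) with ζ = ψ·ν. Then the dilation operator σ_s maps G^o(ψ) into G^o(ζ) and its operator norm between these subspaces satisfies ‖σ_s‖(G^o(ψ) → G^o(ζ)) = φ(G(ν), s^{d+θ}), where s^{d+θ} = ∏_{r=1}^k s(r)^{d(r)+θ(r)}. -/

import Mathlib

noncomputable section

open MeasureTheory Filter Set Topology
open scoped ENNReal NNReal

/-- The set of exponents `p` with `a < p < b` (where `b : ℝ≥0∞` may be `∞`). -/
def expSet (a : ℝ) (b : ℝ≥0∞) : Set ℝ := {p : ℝ | a < p ∧ ENNReal.ofReal p < b}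

/-- The filter of real exponents `p` tending to `b` from below (`p → b⁻`);
when `b = ∞` this amounts to `p → ∞`. -/
def atBbelow (b : ℝ≥0∞) : Filter ℝ :=
  Filter.comap ENNReal.ofReal (nhdsWithin b (Set.Iio b))

/-- The class `EΨ(a,b)`: continuous `ψ` on `(a,b)` with `ψ(p) ≥ 1` and `ψ(b-0) = ∞`. -/
def IsEPsi (a : ℝ) (b : ℝ≥0∞) (ψ : ℝ → ℝ) : Prop :=
  ContinuousOn ψ (expSet a b) ∧ (∀ p ∈ expSet a b, 1 ≤ ψ p) ∧
    Filter.Tendsto ψ (atBbelow b) Filter.atTop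

/-- Norm of the Bilateral Grand Lebesgue space `G(ψ; a, b)` over a measure `μ`:
`‖f‖_{G(ψ)} = sup_{p ∈ (a,b)} ‖f‖_{L^p(μ)} / ψ(p)`, with values in `ℝ≥0∞`. -/
def GNorm {α : Type*} [MeasurableSpace α] (μ : Measure α) (a : ℝ) (b : ℝ≥0∞)
    (ψ : ℝ → ℝ) (f : α → ℝ) : ℝ≥0∞ :=
  ⨆ p ∈ expSet a b, eLpNorm f (ENNReal.ofReal p) μ / ENNReal.ofReal (ψ p)

/-- The class `Ψ(a,b)` (relative to a measure `μ`): positive continuous `ψ` on `(a,b)`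
with `ψ(b-0) = ∞`, admitting a representation `ψ(p) = ‖f‖_{L^p(μ)}` for `p ∈ (a,b)`, where
the measurable `f` lies in `L^p(μ)` for all `p ∈ (a,b)`. -/
def IsPsi {α : Type*} [MeasurableSpace α] (μ : Measure α) (a : ℝ) (b : ℝ≥0∞)
    (ψ : ℝ → ℝ) : Prop :=
  ContinuousOn ψ (expSet a b) ∧ (∀ p ∈ expSet a b, 0 < ψ p) ∧
    Filter.Tendsto ψ (atBbelow b) Filter.atTop ∧
    ∃ f : α → ℝ, AEStronglyMeasurable f μ ∧
      ∀ p ∈ expSet a b, eLpNorm f (ENNReal.ofReal p) μ = ENNReal.ofReal (ψ p)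

/-- The fundamental function `φ(G(ψ;a,b), s) = sup_{p ∈ (a,b)} s^{1/p}/ψ(p)`, real-valued. -/
def fundR (a : ℝ) (b : ℝ≥0∞) (ψ : ℝ → ℝ) (s : ℝ) : ℝ :=
  ⨆ p : expSet a b, s ^ (1 / (p : ℝ)) / ψ p

/-- The fundamental function `φ(G(ψ;a,b), δ) = sup_{p ∈ (a,b)} δ^{1/p}/ψ(p)`, `ℝ≥0∞`-valued. -/
def fundE (a : ℝ) (b : ℝ≥0∞) (ψ : ℝ → ℝ) (δ : ℝ≥0∞) : ℝ≥0∞ :=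
  ⨆ p ∈ expSet a b, δ ^ (1 / p) / ENNReal.ofReal (ψ p)

/-- The space `X = ℝ₊^{d(1)} × ⋯ × ℝ₊^{d(k)}`, modelled as the dependent product
`∀ r : Fin k, (Fin (d r) → ℝ)`; the restriction to the positive orthant is encoded
in the measure `wMeasure` below. -/
abbrev PiX (k : ℕ) (d : Fin k → ℕ) : Type := ∀ r : Fin k, Fin (d r) → ℝ

/-- The positive orthant of `X`. -/
def orthant (k : ℕ) (d : Fin k → ℕ) : Set (PiX k d) := {x | ∀ r i, 0 < x r i}

/-- The weighted measure `μ(V) = ∫_V W(x) dx` on `X = ℝ₊^{d(1)} × ⋯ × ℝ₊^{d(k)}`. -/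
def wMeasure (k : ℕ) (d : Fin k → ℕ) (W : PiX k d → ℝ) : Measure (PiX k d) :=
  (volume.restrict (orthant k d)).withDensity fun x => ENNReal.ofReal (W x)

/-- The dilation operator `(σ_s f)(x) = f(x(d(1))/s(1), …, x(d(k))/s(k))`. -/
def dilate {k : ℕ} {d : Fin k → ℕ} (s : Fin k → ℝ) (f : PiX k d → ℝ) : PiX k d → ℝ :=
  fun x => f fun r i => x r i / s r

/-- `s^e = ∏_{r=1}^k s(r)^{e(r)}`. -/
def sPow {k : ℕ} (s e : Fin k → ℝ) : ℝ := ∏ r, s r ^ e r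

/-- The operator norm `‖σ_s‖(G(ψ) → G(ζ))` of the dilation operator. -/
def dilOpNorm {k : ℕ} {d : Fin k → ℕ} (μ : Measure (PiX k d)) (a : ℝ) (b : ℝ≥0∞)
    (ψ ζ : ℝ → ℝ) (s : Fin k → ℝ) : ℝ≥0∞ :=
  ⨆ f : {f : PiX k d → ℝ // AEStronglyMeasurable f μ},
    GNorm μ a b ζ (dilate s f.1) / GNorm μ a b ψ f.1

/-- The defining condition of the subspace `G^o(ψ)` of `G(ψ)`:
`‖f‖_{L^p(μ)}/ψ(p) → 0` as `ψ(p) → ∞`. -/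
def GoCond {α : Type*} [MeasurableSpace α] (μ : Measure α) (a : ℝ) (b : ℝ≥0∞)
    (ψ : ℝ → ℝ) (f : α → ℝ) : Prop :=
  ∀ ε : ℝ, 0 < ε → ∃ M : ℝ, ∀ p ∈ expSet a b, M ≤ ψ p →
    eLpNorm f (ENNReal.ofReal p) μ / ENNReal.ofReal (ψ p) < ENNReal.ofReal ε

/-- Membership in `G^o(ψ)`. -/
def MemGo {α : Type*} [MeasurableSpace α] (μ : Measure α) (a : ℝ) (b : ℝ≥0∞)
    (ψ : ℝ → ℝ) (f : α → ℝ) : Prop :=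
  AEStronglyMeasurable f μ ∧ GNorm μ a b ψ f < ⊤ ∧ GoCond μ a b ψ f

/-- The operator norm `‖σ_s‖(G^o(ψ) → G^o(ζ))` of the dilation operator between the
subspaces `G^o`. -/
def dilOpNormGo {k : ℕ} {d : Fin k → ℕ} (μ : Measure (PiX k d)) (a : ℝ) (b : ℝ≥0∞)
    (ψ ζ : ℝ → ℝ) (s : Fin k → ℝ) : ℝ≥0∞ :=
  ⨆ f : {f : PiX k d → ℝ // MemGo μ a b ψ f},
    GNorm μ a b ζ (dilate s f.1) / GNorm μ a b ψ f.1

/-- The measurable equivalence `x ↦ (x(d(1))/s(1), …, x(d(k))/s(k))`. -/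
def dilationEquiv {k : ℕ} (d : Fin k → ℕ) (s : Fin k → ℝ) (hs : ∀ r, 0 < s r) :
    PiX k d ≃ᵐ PiX k d :=
  MeasurableEquiv.piCongrRight fun r => MeasurableEquiv.smul₀ (s r)⁻¹ (inv_ne_zero (hs r).ne')

theorem dilationEquiv_apply {k : ℕ} (d : Fin k → ℕ) (s : Fin k → ℝ) (hs : ∀ r, 0 < s r)
    (x : PiX k d) (r : Fin k) : dilationEquiv d s hs x r = (s r)⁻¹ • x r := rfl

theorem dilate_eq_comp {k : ℕ} {d : Fin k → ℕ} (s : Fin k → ℝ) (hs : ∀ r, 0 < s r)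
    (f : PiX k d → ℝ) : dilate s f = f ∘ dilationEquiv d s hs := by
  funext x
  simp only [dilate, Function.comp_apply]
  congr 1
  funext r i
  rw [dilationEquiv_apply, Pi.smul_apply, smul_eq_mul, div_eq_inv_mul]

theorem map_dilationEquiv_volume {k : ℕ} (d : Fin k → ℕ) (s : Fin k → ℝ) (hs : ∀ r, 0 < s r) :
    (volume : Measure (PiX k d)).map (dilationEquiv d s hs) =
      (∏ r, ENNReal.ofReal (s r ^ d r)) • volume := by
  have hr : ∀ r, (volume : Measure (Fin (d r) → ℝ)).map (fun y => (s r)⁻¹ • y) =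
      ENNReal.ofReal (s r ^ d r) • volume := by
    intro r
    have h := Measure.map_addHaar_smul (volume : Measure (Fin (d r) → ℝ))
      (inv_ne_zero (hs r).ne')
    rw [Module.finrank_fin_fun, inv_pow, inv_inv, abs_of_pos (pow_pos (hs r) _)] at h
    exact h
  have hsig : ∀ r, SigmaFinite ((volume : Measure (Fin (d r) → ℝ)).map fun y => (s r)⁻¹ • y) := by
    intro r
    exact (MeasurableEquiv.smul₀ (s r)⁻¹ (inv_ne_zero (hs r).ne')).sigmaFinite_map
  have hpi := Measure.pi_map_pi (μ := fun r => (volume : Measure (Fin (d r) → ℝ)))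
    (f := fun r y => (s r)⁻¹ • y) (fun r => (measurable_const_smul _).aemeasurable)
  refine hpi.trans ?_
  refine Measure.pi_eq fun A _ => ?_
  rw [volume_pi, Measure.smul_apply, Measure.pi_pi, smul_eq_mul, ← Finset.prod_mul_distrib]
  simp only [hr, Measure.smul_apply, smul_eq_mul]

theorem preimage_orthant {k : ℕ} (d : Fin k → ℕ) (s : Fin k → ℝ) (hs : ∀ r, 0 < s r) :
    dilationEquiv d s hs ⁻¹' orthant k d = orthant k d := by
  ext x
  simp only [orthant, mem_preimage, mem_ofPred_eq, dilationEquiv_apply, Pi.smul_apply, smul_eq_mul]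
  exact forall_congr' fun r => forall_congr' fun i =>
    mul_pos_iff_of_pos_left (inv_pos.2 (hs r))

theorem map_withDensity_const_mul_comp {α β : Type*} [MeasurableSpace α] [MeasurableSpace β]
    (μ : Measure α) (e : α ≃ᵐ β) (g : β → ℝ≥0∞) {c : ℝ≥0∞} (hc : c ≠ ∞) :
    (μ.withDensity fun x => c * g (e x)).map e = c • (μ.map e).withDensity g := by
  ext A hA
  rw [e.map_apply, withDensity_apply _ (e.measurable hA), Measure.smul_apply,
    withDensity_apply _ hA, e.restrict_map, lintegral_map_equiv, smul_eq_mul,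
    lintegral_const_mul' _ _ hc]

theorem map_dilationEquiv_wMeasure {k : ℕ} {d : Fin k → ℕ} {θ : Fin k → ℝ}
    {W : ∀ r : Fin k, (Fin (d r) → ℝ) → ℝ}
    (hWhom : ∀ (r : Fin k) (lam : ℝ), 0 < lam → ∀ y, W r (lam • y) = lam ^ θ r * W r y)
    (s : Fin k → ℝ) (hs : ∀ r, 0 < s r) :
    (wMeasure k d fun x => ∏ r, W r (x r)).map (dilationEquiv d s hs) =
      ENNReal.ofReal (sPow s fun r => (d r : ℝ) + θ r) •
        wMeasure k d fun x => ∏ r, W r (x r) := by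
  have hW : ∀ x : PiX k d, ENNReal.ofReal (∏ r, W r (x r)) =
      ENNReal.ofReal (∏ r, s r ^ θ r) *
        ENNReal.ofReal (∏ r, W r (dilationEquiv d s hs x r)) := by
    intro x
    rw [← ENNReal.ofReal_mul (Finset.prod_nonneg fun r _ => Real.rpow_nonneg (hs r).le _),
      ← Finset.prod_mul_distrib]
    congr 1
    refine Finset.prod_congr rfl fun r _ => ?_
    rw [← hWhom r (s r) (hs r), dilationEquiv_apply, smul_inv_smul₀ (hs r).ne']
  have hres : ((volume : Measure (PiX k d)).restrict (orthant k d)).map (dilationEquiv d s hs) =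
      (∏ r, ENNReal.ofReal (s r ^ d r)) • volume.restrict (orthant k d) := by
    rw [← Measure.restrict_smul, ← map_dilationEquiv_volume d s hs,
      MeasurableEquiv.restrict_map, preimage_orthant]
  have hc : ENNReal.ofReal (sPow s fun r => (d r : ℝ) + θ r) =
      ENNReal.ofReal (∏ r, s r ^ θ r) * ∏ r, ENNReal.ofReal (s r ^ d r) := by
    rw [← ENNReal.ofReal_prod_of_nonneg fun r _ => pow_nonneg (hs r).le _,
      ← ENNReal.ofReal_mul (Finset.prod_nonneg fun r _ => Real.rpow_nonneg (hs r).le _),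
      ← Finset.prod_mul_distrib, sPow]
    congr 1
    refine Finset.prod_congr rfl fun r _ => ?_
    rw [Real.rpow_add (hs r), Real.rpow_natCast, mul_comm]
  rw [wMeasure, hc, mul_smul, ← withDensity_smul_measure, ← hres,
    ← map_withDensity_const_mul_comp _ _ _ ENNReal.ofReal_ne_top]
  simp_rw [← hW]

theorem eLpNorm_dilate {k : ℕ} {d : Fin k → ℕ} {μ : Measure (PiX k d)} {s : Fin k → ℝ}
    (hs : ∀ r, 0 < s r) {c : ℝ≥0∞} (hμ : μ.map (dilationEquiv d s hs) = c • μ)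
    (f : PiX k d → ℝ) {p : ℝ} (hp : 0 ≤ p) :
    eLpNorm (dilate s f) (ENNReal.ofReal p) μ =
      c ^ (1 / p) * eLpNorm f (ENNReal.ofReal p) μ := by
  rw [dilate_eq_comp s hs, ← (dilationEquiv d s hs).measurableEmbedding.eLpNorm_map_measure, hμ,
    eLpNorm_smul_measure_of_ne_top ENNReal.ofReal_ne_top, ENNReal.toReal_div,
    ENNReal.toReal_one, ENNReal.toReal_ofReal hp, smul_eq_mul]

theorem aestronglyMeasurable_dilate {k : ℕ} {d : Fin k → ℕ} {μ : Measure (PiX k d)}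
    {s : Fin k → ℝ} (hs : ∀ r, 0 < s r) {c : ℝ≥0∞}
    (hμ : μ.map (dilationEquiv d s hs) = c • μ) {f : PiX k d → ℝ}
    (hf : AEStronglyMeasurable f μ) : AEStronglyMeasurable (dilate s f) μ := by
  rw [dilate_eq_comp s hs]
  refine AEStronglyMeasurable.comp_measurable ?_ (dilationEquiv d s hs).measurable
  rw [hμ]
  exact hf.smul_measure c

theorem rpow_one_div_le_max {c : ℝ≥0∞} {p : ℝ} (hp : 1 ≤ p) : c ^ (1 / p) ≤ max 1 c := by
  have hp0 : 0 ≤ 1 / p := by positivity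
  have hp1 : 1 / p ≤ 1 := (div_le_one (by linarith)).2 hp
  calc c ^ (1 / p) ≤ (max 1 c) ^ (1 / p) := ENNReal.rpow_le_rpow (le_max_right _ _) hp0
    _ ≤ (max 1 c) ^ (1 : ℝ) := ENNReal.rpow_le_rpow_of_exponent_le (le_max_left _ _) hp1
    _ = max 1 c := ENNReal.rpow_one _

theorem eLpNorm_div_le_GNorm {α : Type*} [MeasurableSpace α] (μ : Measure α) {a : ℝ} {b : ℝ≥0∞}
    (ψ : ℝ → ℝ) (f : α → ℝ) {p : ℝ} (hp : p ∈ expSet a b) :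
    eLpNorm f (ENNReal.ofReal p) μ / ENNReal.ofReal (ψ p) ≤ GNorm μ a b ψ f :=
  le_iSup₂_of_le p hp le_rfl

/-- The truncation of `f` to the set where `1 / (n + 1) ≤ |f| ≤ n`. -/
def truncation {α : Type*} (f : α → ℝ) (n : ℕ) : α → ℝ :=
  {x | 1 / ((n : ℝ≥0) + 1) ≤ ‖f x‖₊ ∧ ‖f x‖₊ ≤ n}.indicator f

theorem aestronglyMeasurable_truncation {α : Type*} [MeasurableSpace α] {μ : Measure α}
    {f : α → ℝ} (hf : AEStronglyMeasurable f μ) (n : ℕ) :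
    AEStronglyMeasurable (truncation f n) μ := by
  refine hf.indicator₀ ?_
  have hnorm : AEMeasurable (fun x => ‖f x‖₊) μ := hf.nnnorm.aemeasurable
  have hlower : NullMeasurableSet {x | 1 / ((n : ℝ≥0) + 1) ≤ ‖f x‖₊} μ :=
    nullMeasurableSet_le aemeasurable_const hnorm
  have hupper : NullMeasurableSet {x | ‖f x‖₊ ≤ (n : ℝ≥0)} μ :=
    nullMeasurableSet_le hnorm aemeasurable_const
  exact hlower.inter hupper

theorem tendsto_truncation {α : Type*} (f : α → ℝ) (x : α) :
    Tendsto (fun n => truncation f n x) atTop (𝓝 (f x)) := by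
  rcases eq_or_ne (f x) 0 with h | h
  · have : ∀ n, truncation f n x = f x := fun n => by
      simp only [truncation, indicator_apply, h, ite_self]
    simp only [this, tendsto_const_nhds_iff]
  · refine tendsto_const_nhds.congr' ?_
    obtain ⟨n₁, h₁⟩ := exists_nat_ge ‖f x‖₊
    obtain ⟨n₂, h₂⟩ := exists_nat_one_div_lt (nnnorm_pos.2 h)
    filter_upwards [eventually_ge_atTop n₁, eventually_ge_atTop n₂] with n hn₁ hn₂
    have hmem : x ∈ {x | 1 / ((n : ℝ≥0) + 1) ≤ ‖f x‖₊ ∧ ‖f x‖₊ ≤ n} := by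
      refine ⟨le_trans ?_ h₂.le, h₁.trans (by exact_mod_cast hn₁)⟩
      gcongr
    exact (indicator_of_mem hmem f).symm

theorem eLpNorm_truncation_le {α : Type*} [MeasurableSpace α] (μ : Measure α) (f : α → ℝ) (n : ℕ)
    (p : ℝ≥0∞) : eLpNorm (truncation f n) p μ ≤ eLpNorm f p μ :=
  eLpNorm_indicator_le f

theorem exists_eLpNorm_truncation_le {α : Type*} [MeasurableSpace α] {μ : Measure α}
    {f : α → ℝ} {q : ℝ≥0∞} (hf : MemLp f q μ) (hq0 : q ≠ 0) (hq : q ≠ ∞) (n : ℕ) :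
    ∃ B : ℝ≥0, ∀ p : ℝ, 1 ≤ p → eLpNorm (truncation f n) (ENNReal.ofReal p) μ ≤ B := by
  set S := {x | 1 / ((n : ℝ≥0) + 1) ≤ ‖f x‖₊ ∧ ‖f x‖₊ ≤ n}
  have hSfin : μ S < ∞ :=
    (measure_mono fun x hx => hx.1).trans_lt
      (hf.meas_ge_lt_top (ε := 1 / ((n : ℝ≥0) + 1)) hq0 hq (by positivity))
  have hB : ‖(n : ℝ)‖ₑ * max 1 (μ S) ≠ ∞ :=
    ENNReal.mul_ne_top enorm_ne_top (max_lt ENNReal.one_lt_top hSfin).ne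
  refine ⟨(‖(n : ℝ)‖ₑ * max 1 (μ S)).toNNReal, fun p hp => ?_⟩
  rw [ENNReal.coe_toNNReal hB]
  calc eLpNorm (truncation f n) (ENNReal.ofReal p) μ
      ≤ eLpNorm (S.indicator fun _ => (n : ℝ)) (ENNReal.ofReal p) μ := by
        refine eLpNorm_mono fun x => ?_
        by_cases hx : x ∈ S
        · rw [truncation, indicator_of_mem hx, indicator_of_mem hx]
          have := hx.2
          rw [← NNReal.coe_le_coe] at this
          simpa using this
        · rw [truncation, indicator_of_notMem hx, indicator_of_notMem hx]
    _ ≤ ‖(n : ℝ)‖ₑ * μ S ^ (1 / (ENNReal.ofReal p).toReal) := eLpNorm_indicator_const_le _ _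
    _ ≤ ‖(n : ℝ)‖ₑ * max 1 (μ S) := by
        rw [ENNReal.toReal_ofReal (by linarith)]
        gcongr
        exact rpow_one_div_le_max hp

theorem goCond_of_eLpNorm_le {α : Type*} [MeasurableSpace α] {μ : Measure α} {a : ℝ} {b : ℝ≥0∞}
    (ψ : ℝ → ℝ) {f : α → ℝ} {B : ℝ≥0}
    (hB : ∀ p ∈ expSet a b, eLpNorm f (ENNReal.ofReal p) μ ≤ B) : GoCond μ a b ψ f := by
  intro ε hε
  refine ⟨B / ε + 1, fun p hp hM => ?_⟩
  have hψ : 0 < ψ p := lt_of_lt_of_le (by positivity) hM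
  calc eLpNorm f (ENNReal.ofReal p) μ / ENNReal.ofReal (ψ p)
      ≤ ENNReal.ofReal B / ENNReal.ofReal (ψ p) := by
        rw [ENNReal.ofReal_coe_nnreal]
        exact ENNReal.div_le_div_right (hB p hp) _
    _ = ENNReal.ofReal (B / ψ p) := (ENNReal.ofReal_div_of_pos hψ).symm
    _ < ENNReal.ofReal ε := by
        rw [ENNReal.ofReal_lt_ofReal_iff hε, div_lt_iff₀ hψ]
        have : B / ε < ψ p := by linarith
        rw [div_lt_iff₀ hε] at this
        linarith

theorem GNorm_le_one_of_eLpNorm_le {α : Type*} [MeasurableSpace α] {μ : Measure α} {a : ℝ}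
    {b : ℝ≥0∞} {ψ : ℝ → ℝ} {f : α → ℝ}
    (hf : ∀ p ∈ expSet a b, eLpNorm f (ENNReal.ofReal p) μ ≤ ENNReal.ofReal (ψ p)) :
    GNorm μ a b ψ f ≤ 1 :=
  iSup₂_le fun p hp => ENNReal.div_le_of_le_mul (by simpa using hf p hp)

section

variable {k : ℕ} {d : Fin k → ℕ} {μ : Measure (PiX k d)} {s : Fin k → ℝ} {c : ℝ≥0∞}
  {a : ℝ} {b : ℝ≥0∞} {ψ ζ ν : ℝ → ℝ}

theorem eLpNorm_dilate_div (hs : ∀ r, 0 < s r) (hμ : μ.map (dilationEquiv d s hs) = c • μ)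
    (ha : 1 ≤ a) (hν : ∀ p ∈ expSet a b, 1 ≤ ν p)
    (hmul : ∀ p ∈ expSet a b, ζ p = ψ p * ν p) (f : PiX k d → ℝ) {p : ℝ} (hp : p ∈ expSet a b) :
    eLpNorm (dilate s f) (ENNReal.ofReal p) μ / ENNReal.ofReal (ζ p) =
      c ^ (1 / p) / ENNReal.ofReal (ν p) *
        (eLpNorm f (ENNReal.ofReal p) μ / ENNReal.ofReal (ψ p)) := by
  have hp0 : 0 ≤ p := by linarith [hp.1]
  have hν0 : 0 < ν p := by linarith [hν p hp]
  rw [eLpNorm_dilate hs hμ f hp0, hmul p hp, mul_comm (ψ p), ENNReal.ofReal_mul hν0.le,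
    ENNReal.mul_div_mul_comm (Or.inr ENNReal.ofReal_ne_top)
      (Or.inl ENNReal.ofReal_ne_top)]

theorem GNorm_dilate_le (hs : ∀ r, 0 < s r) (hμ : μ.map (dilationEquiv d s hs) = c • μ)
    (ha : 1 ≤ a) (hν : ∀ p ∈ expSet a b, 1 ≤ ν p)
    (hmul : ∀ p ∈ expSet a b, ζ p = ψ p * ν p) (f : PiX k d → ℝ) :
    GNorm μ a b ζ (dilate s f) ≤ fundE a b ν c * GNorm μ a b ψ f := by
  refine iSup₂_le fun p hp => ?_
  rw [eLpNorm_dilate_div hs hμ ha hν hmul f hp]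
  exact mul_le_mul' (le_iSup₂_of_le p hp le_rfl) (eLpNorm_div_le_GNorm μ ψ f hp)

theorem rpow_div_le_max (ha : 1 ≤ a) (hν : ∀ p ∈ expSet a b, 1 ≤ ν p) {p : ℝ}
    (hp : p ∈ expSet a b) : c ^ (1 / p) / ENNReal.ofReal (ν p) ≤ max 1 c := by
  refine ENNReal.div_le_of_le_mul ((rpow_one_div_le_max (ha.trans hp.1.le)).trans ?_)
  exact le_mul_of_one_le_right' (ENNReal.one_le_ofReal.2 (hν p hp))

theorem goCond_dilate (hs : ∀ r, 0 < s r) (hμ : μ.map (dilationEquiv d s hs) = c • μ)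
    (hc : c ≠ ∞) (ha : 1 ≤ a)
    (hν : ∀ p ∈ expSet a b, 1 ≤ ν p) (hmul : ∀ p ∈ expSet a b, ζ p = ψ p * ν p)
    {f : PiX k d → ℝ} (hfin : GNorm μ a b ψ f < ⊤) (hf : GoCond μ a b ψ f) :
    GoCond μ a b ζ (dilate s f) := by
  intro ε hε
  obtain ⟨K, hK⟩ : ∃ K : ℝ≥0, max 1 c = K :=
    ⟨_, (ENNReal.coe_toNNReal (max_lt ENNReal.one_lt_top hc.lt_top).ne).symm⟩
  have hK1 : 1 ≤ K := by
    rw [← ENNReal.one_le_coe_iff, ← hK]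
    exact le_max_left _ _
  have hKpos : (0 : ℝ) < K := by exact_mod_cast zero_lt_one.trans_le hK1
  obtain ⟨G, hG⟩ : ∃ G : ℝ≥0, GNorm μ a b ψ f = G := ⟨_, (ENNReal.coe_toNNReal hfin.ne).symm⟩
  obtain ⟨M, hM⟩ := hf (ε / K) (by positivity)
  set M' := max M 1
  have hM'pos : 0 < M' := lt_max_of_lt_right one_pos
  refine ⟨M' * (K * G / ε + 1), fun p hp hζp => ?_⟩
  rw [eLpNorm_dilate_div hs hμ ha hν hmul f hp]
  have hν0 : 0 < ν p := one_pos.trans_le (hν p hp)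
  rcases le_or_gt M (ψ p) with h | h
  · calc c ^ (1 / p) / ENNReal.ofReal (ν p) *
          (eLpNorm f (ENNReal.ofReal p) μ / ENNReal.ofReal (ψ p))
        ≤ K * (eLpNorm f (ENNReal.ofReal p) μ / ENNReal.ofReal (ψ p)) := by
          gcongr
          exact hK ▸ rpow_div_le_max ha hν hp
      _ < K * ENNReal.ofReal (ε / K) := by
          refine ENNReal.mul_lt_mul_right ?_ ENNReal.coe_ne_top (hM p hp h)
          exact_mod_cast (zero_lt_one.trans_le hK1).ne'
      _ = ENNReal.ofReal ε := by
          rw [← ENNReal.ofReal_coe_nnreal, ← ENNReal.ofReal_mul hKpos.le,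
            mul_div_cancel₀ _ hKpos.ne']
  · have hνp : K * G / ε + 1 ≤ ν p := by
      rw [hmul p hp] at hζp
      have : ψ p * ν p ≤ M' * ν p :=
        mul_le_mul_of_nonneg_right (h.le.trans (le_max_left _ _)) hν0.le
      exact le_of_mul_le_mul_left (hζp.trans this) hM'pos
    calc c ^ (1 / p) / ENNReal.ofReal (ν p) *
          (eLpNorm f (ENNReal.ofReal p) μ / ENNReal.ofReal (ψ p))
        ≤ K / ENNReal.ofReal (ν p) * G := by
          refine mul_le_mul' (ENNReal.div_le_div_right ?_ _) ?_
          · exact hK ▸ rpow_one_div_le_max (ha.trans hp.1.le)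
          · exact hG ▸ eLpNorm_div_le_GNorm μ ψ f hp
      _ = ENNReal.ofReal (K * G / ν p) := by
          rw [ENNReal.ofReal_div_of_pos hν0, ENNReal.ofReal_mul hKpos.le,
            ENNReal.ofReal_coe_nnreal, ENNReal.ofReal_coe_nnreal, ENNReal.mul_div_right_comm]
      _ < ENNReal.ofReal ε := by
          rw [ENNReal.ofReal_lt_ofReal_iff hε, div_lt_iff₀ hν0]
          have : K * G / ε < ν p := by linarith
          rw [div_lt_iff₀ hε] at this
          linarith

theorem memGo_dilate (hs : ∀ r, 0 < s r) (hμ : μ.map (dilationEquiv d s hs) = c • μ)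
    (hc : c ≠ ∞) (ha : 1 ≤ a)
    (hν : ∀ p ∈ expSet a b, 1 ≤ ν p) (hmul : ∀ p ∈ expSet a b, ζ p = ψ p * ν p)
    {f : PiX k d → ℝ} (hf : MemGo μ a b ψ f) : MemGo μ a b ζ (dilate s f) := by
  refine ⟨aestronglyMeasurable_dilate hs hμ hf.1, ?_,
    goCond_dilate hs hμ hc ha hν hmul hf.2.1 hf.2.2⟩
  have hfund : fundE a b ν c ≤ max 1 c := iSup₂_le fun p hp => rpow_div_le_max ha hν hp
  exact (GNorm_dilate_le hs hμ ha hν hmul f).trans_lt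
    (ENNReal.mul_lt_top (hfund.trans_lt (max_lt ENNReal.one_lt_top hc.lt_top)) hf.2.1)

theorem memGo_truncation {α : Type*} [MeasurableSpace α] {μ : Measure α} (ha : 1 ≤ a)
    {f : α → ℝ} (hf : AEStronglyMeasurable f μ)
    (hfψ : ∀ p ∈ expSet a b, eLpNorm f (ENNReal.ofReal p) μ = ENNReal.ofReal (ψ p)) (n : ℕ) :
    MemGo μ a b ψ (truncation f n) := by
  refine ⟨aestronglyMeasurable_truncation hf n, ?_, ?_⟩
  · exact (GNorm_le_one_of_eLpNorm_le fun p hp =>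
      (eLpNorm_truncation_le μ f n _).trans_eq (hfψ p hp)).trans_lt ENNReal.one_lt_top
  · rcases (expSet a b).eq_empty_or_nonempty with h | ⟨q, hq⟩
    · exact goCond_of_eLpNorm_le (B := 0) ψ fun p hp => absurd hp (h ▸ notMem_empty p)
    · have hmem : MemLp f (ENNReal.ofReal q) μ := ⟨hf, hfψ q hq ▸ ENNReal.ofReal_lt_top⟩
      have hq0 : ENNReal.ofReal q ≠ 0 := (ENNReal.ofReal_pos.2 (by linarith [hq.1])).ne'
      obtain ⟨B, hB⟩ := exists_eLpNorm_truncation_le hmem hq0 ENNReal.ofReal_ne_top n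
      exact goCond_of_eLpNorm_le ψ fun p hp => hB p (ha.trans hp.1.le)

theorem fundE_le_dilOpNormGo (hs : ∀ r, 0 < s r) (hμ : μ.map (dilationEquiv d s hs) = c • μ)
    (ha : 1 ≤ a) (hψ : IsPsi μ a b ψ) (hν : ∀ p ∈ expSet a b, 1 ≤ ν p)
    (hmul : ∀ p ∈ expSet a b, ζ p = ψ p * ν p) :
    fundE a b ν c ≤ dilOpNormGo μ a b ψ ζ s := by
  obtain ⟨-, hψpos, -, f, hf, hfψ⟩ := hψ
  refine iSup₂_le fun p hp => ?_
  have hbound : ∀ n, c ^ (1 / p) / ENNReal.ofReal (ν p) *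
      (eLpNorm (truncation f n) (ENNReal.ofReal p) μ / ENNReal.ofReal (ψ p)) ≤
        dilOpNormGo μ a b ψ ζ s := by
    intro n
    have hone : GNorm μ a b ψ (truncation f n) ≤ 1 := GNorm_le_one_of_eLpNorm_le fun q hq =>
      (eLpNorm_truncation_le μ f n _).trans_eq (hfψ q hq)
    rw [← eLpNorm_dilate_div hs hμ ha hν hmul _ hp]
    calc eLpNorm (dilate s (truncation f n)) (ENNReal.ofReal p) μ / ENNReal.ofReal (ζ p)
        ≤ GNorm μ a b ζ (dilate s (truncation f n)) := eLpNorm_div_le_GNorm μ ζ _ hp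
      _ ≤ GNorm μ a b ζ (dilate s (truncation f n)) / GNorm μ a b ψ (truncation f n) :=
          (div_one _).symm.trans_le (ENNReal.div_le_div_left hone _)
      _ ≤ dilOpNormGo μ a b ψ ζ s :=
          le_iSup (fun g : {g : PiX k d → ℝ // MemGo μ a b ψ g} =>
            GNorm μ a b ζ (dilate s g.1) / GNorm μ a b ψ g.1)
            ⟨truncation f n, memGo_truncation ha hf hfψ n⟩
  have hlim : Tendsto (fun n => eLpNorm (truncation f n) (ENNReal.ofReal p) μ) atTop
      (𝓝 (ENNReal.ofReal (ψ p))) := by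
    have hle : ∀ n, eLpNorm (truncation f n) (ENNReal.ofReal p) μ ≤ ENNReal.ofReal (ψ p) :=
      fun n => (eLpNorm_truncation_le μ f n _).trans_eq (hfψ p hp)
    refine tendsto_of_le_liminf_of_limsup_le ?_ ?_
    · rw [← hfψ p hp]
      exact Lp.eLpNorm_lim_le_liminf_eLpNorm (aestronglyMeasurable_truncation hf) f
        (ae_of_all _ (tendsto_truncation f))
    · exact limsup_le_of_le (by isBoundedDefault) (Eventually.of_forall hle)
  have hψ0 : ENNReal.ofReal (ψ p) ≠ 0 := (ENNReal.ofReal_pos.2 (hψpos p hp)).ne'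
  have hquot := ENNReal.Tendsto.div_const hlim (b := ENNReal.ofReal (ψ p)) (Or.inr hψ0)
  rw [ENNReal.div_self hψ0 ENNReal.ofReal_ne_top] at hquot
  have hprod := ENNReal.Tendsto.const_mul (a := c ^ (1 / p) / ENNReal.ofReal (ν p)) hquot
    (Or.inl one_ne_zero)
  rw [mul_one] at hprod
  exact le_of_tendsto' hprod hbound

theorem dilOpNormGo_le_fundE (hs : ∀ r, 0 < s r) (hμ : μ.map (dilationEquiv d s hs) = c • μ)
    (ha : 1 ≤ a) (hν : ∀ p ∈ expSet a b, 1 ≤ ν p)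
    (hmul : ∀ p ∈ expSet a b, ζ p = ψ p * ν p) :
    dilOpNormGo μ a b ψ ζ s ≤ fundE a b ν c :=
  iSup_le fun f => ENNReal.div_le_of_le_mul (GNorm_dilate_le hs hμ ha hν hmul f.1)

end

/-- **Corollary 1.BB.** Let `ψ ∈ Ψ(a,b)` and `ζ, ν ∈ EΨ(a,b)` with
`ζ = ψ·ν`. Then the dilation operator `σ_s` maps `G^o(ψ)` into `G^o(ζ)` and its operator
norm between these subspaces equals `φ(G(ν), s^{d+θ})`, `s^{d+θ} = ∏_r s(r)^{d(r)+θ(r)}`. -/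
theorem dilation_opNorm_Go
    (k : ℕ) (d : Fin k → ℕ) (θ : Fin k → ℝ)
    (W : ∀ r : Fin k, (Fin (d r) → ℝ) → ℝ)
    (hWnn : ∀ r y, 0 ≤ W r y)
    (hWcont : ∀ r, ContinuousOn (W r) {y | y ≠ 0})
    (hWnontriv : ∀ r, ∃ y, W r y ≠ 0)
    (hWhom : ∀ (r : Fin k) (lam : ℝ), 0 < lam → ∀ y, W r (lam • y) = lam ^ θ r * W r y)
    (a : ℝ) (b : ℝ≥0∞) (ha : 1 ≤ a) (hab : ENNReal.ofReal a < b)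
    (ψ ζ ν : ℝ → ℝ)
    (hψ : IsPsi (wMeasure k d fun x => ∏ r, W r (x r)) a b ψ)
    (hζ : IsEPsi a b ζ) (hν : IsEPsi a b ν)
    (hmul : ∀ p ∈ expSet a b, ζ p = ψ p * ν p)
    (s : Fin k → ℝ) (hs : ∀ r, 0 < s r) :
    (∀ f : PiX k d → ℝ, MemGo (wMeasure k d fun x => ∏ r, W r (x r)) a b ψ f →
        MemGo (wMeasure k d fun x => ∏ r, W r (x r)) a b ζ (dilate s f)) ∧
      dilOpNormGo (wMeasure k d fun x => ∏ r, W r (x r)) a b ψ ζ s =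
        fundE a b ν (ENNReal.ofReal (sPow s fun r => (d r : ℝ) + θ r)) := by
  have hμ := map_dilationEquiv_wMeasure hWhom s hs
  exact ⟨fun f hf => memGo_dilate hs hμ ENNReal.ofReal_ne_top ha hν.2.1 hmul hf,
    le_antisymm (dilOpNormGo_le_fundE hs hμ ha hν.2.1 hmul)
      (fundE_le_dilOpNormGo hs hμ ha hψ hν.2.1 hmul)⟩
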